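/- Let (Q1,+1) and (Q2,+2) be commutative Moufang loops and for i = 1,2 let φi, ψi be automorphisms of (Qi,+i) with x +i φi(x) ∈ Z(Qi) and x +i ψi(x) ∈ Z(Qi) for all x, and let ci ∈ Z(Qi). Let (Qi,*i) be the quasigroup with x *i y = (φi(x) +i ψi(y)) +i ci. Then (Q1,*1) and (Q2,*2) are isomorphic if and only if there exist a loop isomorphism f : (Q1,+1) → (Q2,+2) and an element u ∈ { x -1 (φ1(x) +1 ψ1(x)) : x ∈ Q1 } such that φ2 = f∘φ1∘f⁻¹, ψ2 = f∘ψ1∘f⁻¹, and c2 = f(c1 +1 u). -/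

import Mathlib

/-- A loop: a quasigroup with a two-sided neutral element. -/
structure Loop (Q : Type) where
  add : Q → Q → Q
  zero : Q
  addLeftBij : ∀ x, Function.Bijective fun y => add x y
  addRightBij : ∀ x, Function.Bijective fun y => add y x
  zero_add : ∀ x, add zero x = x
  add_zero : ∀ x, add x zero = x

namespace Loop

/-- The center of a loop: elements commuting and associating with everything. -/
def center {Q : Type} (L : Loop Q) : Set Q :=
  {z | (∀ x, L.add z x = L.add x z) ∧
       (∀ x y, L.add z (L.add x y) = L.add (L.add z x) y) ∧
       (∀ x y, L.add x (L.add z y) = L.add (L.add x z) y) ∧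
       (∀ x y, L.add x (L.add y z) = L.add (L.add x y) z)}

/-- A map `α` is central if `Z(Q) + α(x) = Z(Q) + x` for every `x`. -/
def IsCentral {Q : Type} (L : Loop Q) (α : Q → Q) : Prop :=
  ∀ x, (fun z => L.add z (α x)) '' L.center = (fun z => L.add z x) '' L.center

/-- Automorphism of a loop: a bijective map respecting the operation. -/
def IsAut {Q : Type} (L : Loop Q) (f : Q → Q) : Prop :=
  Function.Bijective f ∧ ∀ x y, f (L.add x y) = L.add (f x) (f y)

/-- `neg` provides two-sided inverses for the loop. -/
def IsTwoSidedInv {Q : Type} (L : Loop Q) (neg : Q → Q) : Prop :=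
  ∀ x, L.add x (neg x) = L.zero ∧ L.add (neg x) x = L.zero

/-- Commutative Moufang loop: commutative and satisfying the Moufang identity. -/
def IsCommMoufang {Q : Type} (L : Loop Q) : Prop :=
  (∀ x y, L.add x y = L.add y x) ∧
  (∀ x y z, L.add x (L.add y (L.add x z)) = L.add (L.add (L.add x y) x) z)

end Loop

namespace Loop

variable {Q : Type} {L : Loop Q} {neg : Q → Q}

theorem cancelL {x y z : Q} (e : L.add x y = L.add x z) : y = z := (L.addLeftBij x).1 e

theorem cancelR {x y z : Q} (e : L.add y x = L.add z x) : y = z := (L.addRightBij x).1 e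

theorem ip (h : L.IsCommMoufang) (hn : L.IsTwoSidedInv neg) (x z : Q) :
    L.add (neg x) (L.add x z) = z := by
  apply cancelL (L := L) (x := x)
  rw [h.2 x (neg x) z, (hn x).1, L.zero_add]

theorem negneg (hn : L.IsTwoSidedInv neg) (x : Q) : neg (neg x) = x := by
  apply cancelL (L := L) (x := neg x)
  rw [(hn _).1, (hn x).2]

theorem ip2 (h : L.IsCommMoufang) (hn : L.IsTwoSidedInv neg) (x z : Q) :
    L.add x (L.add (neg x) z) = z := by
  have := ip h hn (neg x) z
  rwa [negneg hn] at this

theorem ip3 (h : L.IsCommMoufang) (hn : L.IsTwoSidedInv neg) (x z : Q) :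
    L.add x (neg (L.add x z)) = neg z := by
  have e1 : L.add (L.add x z) (neg z) = x := by
    rw [h.1 _ (neg z), h.1 x z, ip h hn]
  have := ip h hn (L.add x z) (neg z)
  rw [e1] at this
  rw [h.1, this]

theorem middle (h : L.IsCommMoufang) (hn : L.IsTwoSidedInv neg) (x y z : Q) :
    L.add (L.add x y) (L.add x z) = L.add (L.add x x) (L.add y z) := by
  have e := h.2 x (L.add y z) (neg (L.add x z))
  have e2 : L.add (L.add y z) (neg z) = y := by
    rw [h.1 _ (neg z), h.1 y z, ip h hn]
  rw [ip3 h hn, e2] at e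
  have e3 : L.add (L.add x (L.add y z)) x = L.add (L.add x x) (L.add y z) := by
    have := h.2 x L.zero (L.add y z)
    rw [L.zero_add, L.add_zero] at this
    rw [h.1, this]
  rw [e, e3, h.1 _ (L.add x z), h.1 _ (neg (L.add x z)), ip2 h hn]

theorem center_right {z : Q} (hz : z ∈ L.center) (x y : Q) :
    L.add (L.add x y) z = L.add (L.add x z) y := by
  rw [← hz.2.2.2, ← hz.2.2.1, hz.1]

theorem center_add {z w : Q} (hz : z ∈ L.center) (hw : w ∈ L.center) (x y : Q) :
    L.add (L.add x z) (L.add y w) = L.add (L.add x y) (L.add z w) := by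
  rw [hw.2.2.2, hw.2.2.2, ← hz.2.2.1, hz.1, hz.2.2.2]

/-- Key translation identity. -/
theorem key (h : L.IsCommMoufang) (hn : L.IsTwoSidedInv neg) {φ ψ : Q → Q}
    (hφ : L.IsAut φ) (hψ : L.IsAut ψ)
    (hφc : ∀ x, L.add x (φ x) ∈ L.center) (hψc : ∀ x, L.add x (ψ x) ∈ L.center) (a y z : Q) :
    L.add (φ (L.add y a)) (ψ (L.add z a)) =
      L.add (L.add (L.add (φ y) (ψ z)) (L.add (neg a) (L.add (φ a) (ψ a)))) a := by
  obtain ⟨p, hp, ep⟩ : ∃ p ∈ L.center, φ a = L.add (neg a) p :=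
    ⟨_, hφc a, (ip h hn _ _).symm⟩
  obtain ⟨q, hq, eq⟩ : ∃ q ∈ L.center, ψ a = L.add (neg a) q :=
    ⟨_, hψc a, (ip h hn _ _).symm⟩
  rw [hφ.2, hψ.2, ep, eq, center_add hp hq, hp.2.2.2, hq.2.2.2, center_add hp hq]
  generalize φ y = Y
  generalize ψ z = Z
  have tri (w : Q) : L.add (L.add w (L.add (neg a) (L.add (neg a) (neg a)))) a
      = L.add w (L.add (neg a) (neg a)) := by
    have e1 := h.2 (neg a) (neg a) w
    have e2 := h.2 (neg a) L.zero w
    rw [L.zero_add, L.add_zero] at e2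
    rw [h.1 w (L.add (neg a) (L.add _ _)), h.1 (neg a) (L.add _ _), ← e1, h.1 _ a, ip2 h hn, e2,
      h.1 w]
  have hm : L.add (L.add Y (neg a)) (L.add Z (neg a)) =
      L.add (L.add Y Z) (L.add (neg a) (neg a)) := by
    rw [h.1 Y, h.1 Z, middle h hn, h.1]
  rw [hm, hp.2.2.1 (L.add (neg a) (neg a)) q]
  have e4 : L.add (neg a) (L.add (L.add (L.add (neg a) (neg a)) p) q) =
     L.add (L.add (L.add (neg a) (L.add (neg a) (neg a))) p) q := by
    rw [hq.2.2.2, hp.2.2.2]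
  have e5 (W T : Q) : L.add W (L.add (L.add T p) q) = L.add (L.add (L.add W T) p) q := by
    rw [hq.2.2.2, hp.2.2.2]
  rw [e4, e5, hp.2.2.1 _ q, ← center_right hq _ a, ← center_right hp _ a, tri]

theorem neg_d (h : L.IsCommMoufang) (hn : L.IsTwoSidedInv neg) (a s : Q) :
    L.add a (neg s) = neg (L.add (neg a) s) := by
  have := ip3 h hn a (L.add (neg a) s)
  rwa [ip2 h hn] at this

theorem exists_neg (h : L.IsCommMoufang) : ∃ neg : Q → Q, L.IsTwoSidedInv neg := by
  choose n hn using fun x => (L.addLeftBij x).2 L.zero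
  exact ⟨n, fun x => ⟨hn x, by rw [h.1]; exact hn x⟩⟩

theorem hom_zero {Q' : Type} {L' : Loop Q'} {f : Q → Q'}
    (hf : ∀ x y, f (L.add x y) = L'.add (f x) (f y)) : f L.zero = L'.zero := by
  apply cancelL (L := L') (x := f L.zero)
  rw [← hf, L.zero_add, L'.add_zero]

theorem hom_neg {Q' : Type} {L' : Loop Q'} {neg' : Q' → Q'} (hn : L.IsTwoSidedInv neg)
    (hn' : L'.IsTwoSidedInv neg') {f : Q → Q'}
    (hf : ∀ x y, f (L.add x y) = L'.add (f x) (f y)) (x : Q) : f (neg x) = neg' (f x) := by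
  apply cancelL (L := L') (x := f x)
  rw [← hf, (hn x).1, (hn' _).1, hom_zero hf]

end Loop

open Loop in
/-- Isomorphism theorem for centrally affine quasigroups over commutative
Moufang loops. -/
theorem stmt {Q₁ Q₂ : Type} (L₁ : Loop Q₁) (L₂ : Loop Q₂)
    (h₁ : L₁.IsCommMoufang) (h₂ : L₂.IsCommMoufang)
    (neg₁ : Q₁ → Q₁) (hneg₁ : L₁.IsTwoSidedInv neg₁)
    (φ₁ ψ₁ : Q₁ → Q₁) (hφ₁ : L₁.IsAut φ₁) (hψ₁ : L₁.IsAut ψ₁)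
    (hφ₁c : ∀ x, L₁.add x (φ₁ x) ∈ L₁.center)
    (hψ₁c : ∀ x, L₁.add x (ψ₁ x) ∈ L₁.center)
    (φ₂ ψ₂ : Q₂ → Q₂) (hφ₂ : L₂.IsAut φ₂) (hψ₂ : L₂.IsAut ψ₂)
    (hφ₂c : ∀ x, L₂.add x (φ₂ x) ∈ L₂.center)
    (hψ₂c : ∀ x, L₂.add x (ψ₂ x) ∈ L₂.center)
    (c₁ : Q₁) (hc₁ : c₁ ∈ L₁.center) (c₂ : Q₂) (hc₂ : c₂ ∈ L₂.center) :
    (∃ g : Q₁ ≃ Q₂, ∀ x y,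
        g (L₁.add (L₁.add (φ₁ x) (ψ₁ y)) c₁) =
          L₂.add (L₂.add (φ₂ (g x)) (ψ₂ (g y))) c₂) ↔
      (∃ f : Q₁ ≃ Q₂, (∀ x y, f (L₁.add x y) = L₂.add (f x) (f y)) ∧
        ∃ u ∈ {w : Q₁ | ∃ x, w = L₁.add x (neg₁ (L₁.add (φ₁ x) (ψ₁ x)))},
          (∀ x, φ₂ x = f (φ₁ (f.symm x))) ∧
          (∀ x, ψ₂ x = f (ψ₁ (f.symm x))) ∧
          c₂ = f (L₁.add c₁ u)) := by
  obtain ⟨neg₂, hneg₂⟩ := exists_neg h₂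
  constructor
  · rintro ⟨g, hg⟩
    let a := g L₁.zero
    let f : Q₁ ≃ Q₂ := g.trans (Equiv.ofBijective _ (L₂.addRightBij (neg₂ a)))
    have f_def (x) : f x = L₂.add (g x) (neg₂ a) := rfl
    have g_eq (x) : g x = L₂.add (f x) a := by
      rw [f_def, h₂.1 _ a, h₂.1 (g x), ip2 h₂ hneg₂]
    have f0 : f L₁.zero = L₂.zero := by
      rw [f_def]; exact (hneg₂ _).1
    let d := L₂.add (neg₂ a) (L₂.add (φ₂ a) (ψ₂ a))
    have main (x y) : f (L₁.add (L₁.add (φ₁ x) (ψ₁ y)) c₁) =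
        L₂.add (L₂.add (φ₂ (f x)) (ψ₂ (f y))) (L₂.add d c₂) := by
      have := hg x y
      rw [g_eq, g_eq x, g_eq y, key h₂ hneg₂ hφ₂ hψ₂ hφ₂c hψ₂c, center_right hc₂] at this
      rw [cancelR this, hc₂.2.2.2]
    generalize hc' : L₂.add d c₂ = c' at main
    have φ10 := hom_zero hφ₁.2
    have ψ10 := hom_zero hψ₁.2
    have φ20 := hom_zero hφ₂.2
    have ψ20 := hom_zero hψ₂.2
    obtain ⟨i, hi⟩ : ∃ i : Q₁ → Q₁, ∀ x, φ₁ (i x) = x := ⟨_, Function.surjInv_eq hφ₁.1.2⟩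
    obtain ⟨j, hj⟩ : ∃ j : Q₁ → Q₁, ∀ x, ψ₁ (j x) = x := ⟨_, Function.surjInv_eq hψ₁.1.2⟩
    have eA (x) : f (L₁.add (φ₁ x) c₁) = L₂.add (φ₂ (f x)) c' := by
      have := main x L₁.zero
      rwa [f0, ψ10, ψ20, L₁.add_zero, L₂.add_zero] at this
    have eB (x) : f (L₁.add (ψ₁ x) c₁) = L₂.add (ψ₂ (f x)) c' := by
      have := main L₁.zero x
      rwa [f0, φ10, φ20, L₁.zero_add, L₂.zero_add] at this
    obtain ⟨A, hA⟩ : ∃ A : Q₁ → Q₂, ∀ x, A x = φ₂ (f (i x)) := ⟨_, fun _ => rfl⟩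
    have eA' (x) : f (L₁.add x c₁) = L₂.add (A x) c' := by
      have := eA (i x)
      rwa [hi, ← hA] at this
    have hB (x) : A x = ψ₂ (f (j x)) := by
      have := eB (j x)
      rw [hj, eA'] at this
      exact cancelR this
    have homA (x y) : A (L₁.add x y) = L₂.add (A x) (A y) := by
      have := main (i x) (j y)
      rw [hi, hj, eA', ← hA, ← hB] at this
      exact cancelR this
    have Ac : A c₁ = c' := by
      have := eA' (neg₁ c₁)
      rw [(hneg₁ _).2, f0, ← (hneg₂ (A (neg₁ c₁))).1] at this
      rw [cancelL this.symm, ← hom_neg hneg₁ hneg₂ homA, negneg hneg₁]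
    have fA (x) : f x = A x := by
      obtain ⟨y, rfl⟩ := (L₁.addRightBij c₁).2 x
      change f (L₁.add y c₁) = A (L₁.add y c₁)
      rw [eA', homA, Ac]
    have homf (x y) : f (L₁.add x y) = L₂.add (f x) (f y) := by
      rw [fA, fA, fA, homA]
    have cφ (x) : φ₂ (f x) = f (φ₁ x) := by
      rw [fA (φ₁ x), hA]
      congr 2
      exact hφ₁.1.1 (hi _).symm
    have cψ (x) : ψ₂ (f x) = f (ψ₁ x) := by
      rw [fA (ψ₁ x), hB]
      congr 2
      exact hψ₁.1.1 (hj _).symm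
    refine ⟨f, homf, _, ⟨f.symm a, rfl⟩, fun x => ?_, fun x => ?_, ?_⟩
    · rw [← cφ, f.apply_symm_apply]
    · rw [← cψ, f.apply_symm_apply]
    · rw [homf, homf, hom_neg hneg₁ hneg₂ homf, homf, ← cφ, ← cψ, f.apply_symm_apply,
        neg_d h₂ hneg₂, fA c₁, Ac, ← hc', h₂.1 _ (neg₂ _)]
      exact (ip h₂ hneg₂ d c₂).symm
  · rintro ⟨f, homf, u, ⟨t, rfl⟩, hφ, hψ, hc⟩
    have cφ (x) : φ₂ (f x) = f (φ₁ x) := by rw [hφ, f.symm_apply_apply]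
    have cψ (x) : ψ₂ (f x) = f (ψ₁ x) := by rw [hψ, f.symm_apply_apply]
    refine ⟨f.trans (Equiv.ofBijective _ (L₂.addRightBij (f t))), fun x y => ?_⟩
    change L₂.add (f _) (f t) = L₂.add (L₂.add (φ₂ (L₂.add (f x) (f t)))
      (ψ₂ (L₂.add (f y) (f t)))) c₂
    rw [homf, homf, hom_neg hneg₁ hneg₂ homf, homf, ← cφ, ← cψ, neg_d h₂ hneg₂] at hc
    rw [key h₂ hneg₂ hφ₂ hψ₂ hφ₂c hψ₂c, center_right hc₂, ← hc₂.2.2.2]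
    have e := ip2 h₂ hneg₂ (L₂.add (neg₂ (f t)) (L₂.add (φ₂ (f t)) (ψ₂ (f t)))) (f c₁)
    rw [h₂.1 (neg₂ _) (f c₁), ← hc] at e
    rw [e, homf, homf, cφ, cψ]
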